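/- arXiv:cs/0106008 — 2 statements merged into one kernel-verified Lean document; each statement's English description precedes it below -/
import Mathlib

section
/- Let L be a finite complete lattice and τ : ι → L → L a family of operators (ι a finite nonempty type) such that every τ i is monotone and deflationary. If t and t' are two fair index sequences, then the traces from the same starting element b along t and along t' are both eventually constant and have the same eventual value. -/
/-!
A trace of deflationary operators is decreasing, so well-foundedness makes it stabilize. Fairness
turns the eventual value into a common fixed point of the operators, and monotonicity keeps every
common fixed point below the starting element below the whole trace. The eventual value is thus the
greatest common fixed point below the starting element, whatever the fair index sequence.
-/

open Filter Function

section

variable {L ι : Type*} {τ : ι → L → L} {b : L} {t : ℕ → ι} {x : ℕ → L}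

/-- Fairness of an index sequence: every index occurs infinitely often. -/
def IsFair (t : ℕ → ι) : Prop :=
  ∀ i, ∃ᶠ k in atTop, t k = i

/-- `x` is the trace from `b` along `t`: the sequence obtained by starting at `b` and applying the
operators `τ (t 0)`, `τ (t 1)`, … in turn. -/
structure IsTrace (τ : ι → L → L) (b : L) (t : ℕ → ι) (x : ℕ → L) : Prop where
  zero : x 0 = b
  succ (k : ℕ) : x (k + 1) = τ (t k) (x k)

/-- The common fixed points below `b` of the operators `τ i`; the eventual value of a fair trace
from `b` is the greatest of them. -/
def commonFixedPointsBelow [LE L] (τ : ι → L → L) (b : L) : Set L :=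
  {y | y ≤ b ∧ ∀ i, IsFixedPt (τ i) y}

namespace IsTrace

theorem isFixedPt_of_forall_ge_eq (hx : IsTrace τ b t x) (ht : IsFair t) {N : ℕ}
    (hN : ∀ k ≥ N, x k = x N) (i : ι) : IsFixedPt (τ i) (x N) := by
  obtain ⟨k, hk, rfl⟩ := frequently_atTop.1 (ht i) N
  calc
    τ (t k) (x N) = τ (t k) (x k) := by rw [hN k hk]
    _ = x (k + 1) := (hx.succ k).symm
    _ = x N := hN (k + 1) (Nat.le_succ_of_le hk)

section Preorder

variable [Preorder L]

theorem antitone (hx : IsTrace τ b t x) (hdef : ∀ i y, τ i y ≤ y) : Antitone x :=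
  antitone_nat_of_succ_le fun k => (hx.succ k).trans_le (hdef (t k) (x k))

theorem le_of_forall_le_map (hx : IsTrace τ b t x) (hmono : ∀ i, Monotone (τ i)) {y : L}
    (hyb : y ≤ b) (hy : ∀ i, y ≤ τ i y) (k : ℕ) : y ≤ x k := by
  induction k with
  | zero => exact hyb.trans_eq hx.zero.symm
  | succ k ih =>
    calc
      y ≤ τ (t k) y := hy (t k)
      _ ≤ τ (t k) (x k) := hmono (t k) ih
      _ = x (k + 1) := (hx.succ k).symm

theorem isGreatest_commonFixedPointsBelow (hx : IsTrace τ b t x) (ht : IsFair t)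
    (hmono : ∀ i, Monotone (τ i)) (hdef : ∀ i y, τ i y ≤ y) {N : ℕ}
    (hN : ∀ k ≥ N, x k = x N) : IsGreatest (commonFixedPointsBelow τ b) (x N) := by
  have hb : x N ≤ b := (hx.antitone hdef N.zero_le).trans_eq hx.zero
  exact ⟨⟨hb, hx.isFixedPt_of_forall_ge_eq ht hN⟩,
    fun _ hy => hx.le_of_forall_le_map hmono hy.1 (fun i => (hy.2 i).ge) N⟩

end Preorder

theorem exists_forall_ge_eq [PartialOrder L] [WellFoundedLT L] (hx : IsTrace τ b t x)
    (hdef : ∀ i y, τ i y ≤ y) : ∃ N, ∀ k ≥ N, x k = x N := by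
  obtain ⟨N, hN⟩ := WellFoundedLT.antitone_chain_condition (hx.antitone hdef)
  exact ⟨N, fun k hk => (hN k hk).symm⟩

end IsTrace

theorem stmt_3_general [PartialOrder L] [WellFoundedLT L]
    (hmono : ∀ i, Monotone (τ i)) (hdef : ∀ i y, τ i y ≤ y) {t' : ℕ → ι} {x' : ℕ → L}
    (ht : IsFair t) (ht' : IsFair t') (hx : IsTrace τ b t x) (hx' : IsTrace τ b t' x') :
    ∃ N N', (∀ k ≥ N, x k = x N) ∧ (∀ k ≥ N', x' k = x' N') ∧ x N = x' N' := by
  obtain ⟨N, hN⟩ := hx.exists_forall_ge_eq hdef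
  obtain ⟨N', hN'⟩ := hx'.exists_forall_ge_eq hdef
  have greatest := hx.isGreatest_commonFixedPointsBelow ht hmono hdef hN
  have greatest' := hx'.isGreatest_commonFixedPointsBelow ht' hmono hdef hN'
  exact ⟨N, N', hN, hN', greatest.unique greatest'⟩

end

/-- In a finite complete lattice, any two fair traces from the same starting
element along monotone deflationary operators are eventually constant with
the same eventual value. -/
theorem stmt_3 {L ι : Type*} [CompleteLattice L] [Fintype L] [Fintype ι] [Nonempty ι]
    (τ : ι → L → L) (hmono : ∀ i, Monotone (τ i)) (hdef : ∀ i x, τ i x ≤ x)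
    (b : L) (t t' : ℕ → ι)
    (hfair : ∀ i : ι, ∀ N : ℕ, ∃ k ≥ N, t k = i)
    (hfair' : ∀ i : ι, ∀ N : ℕ, ∃ k ≥ N, t' k = i)
    (x x' : ℕ → L)
    (hx0 : x 0 = b) (hxs : ∀ k, x (k + 1) = τ (t k) (x k))
    (hx0' : x' 0 = b) (hxs' : ∀ k, x' (k + 1) = τ (t' k) (x' k)) :
    ∃ N N', (∀ k ≥ N, x k = x N) ∧ (∀ k ≥ N', x' k = x' N') ∧ x N = x' N' :=
  stmt_3_general hmono hdef (fun i => frequently_atTop.2 (hfair i))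
    (fun i => frequently_atTop.2 (hfair' i)) ⟨hx0, hxs⟩ ⟨hx0', hxs'⟩
end

section
/- Let an interval constraint system on ℝⁿ be given and let B₀ be a box. If the system is failed below B₀, then the system has no solution lying in B₀. -/
/-- A box in `ℝⁿ`: a product of convex subsets of `ℝ`. -/
def IsBox {n : ℕ} (B : Set (Fin n → ℝ)) : Prop :=
  ∃ I : Fin n → Set ℝ, (∀ j, Convex ℝ (I j)) ∧ B = Set.pi Set.univ I

/-- The contraction operator of a relation `r ⊆ ℝⁿ`. -/
def contractOp {n : ℕ} (r : Set (Fin n → ℝ)) (B : Set (Fin n → ℝ)) :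
    Set (Fin n → ℝ) :=
  Set.pi Set.univ fun j => convexHull ℝ ((fun x => x j) '' (r ∩ B))

/-- Failure of an interval constraint system below a box. -/
def Failed {n m : ℕ} (r : Fin m → Set (Fin n → ℝ)) (B : Set (Fin n → ℝ)) : Prop :=
  ∀ C : Set (Fin n → ℝ), IsBox C → C ⊆ B →
    (∀ i, contractOp (r i) C = C) → C = ∅

theorem isBox_singleton {n : ℕ} (s : Fin n → ℝ) : IsBox {s} :=
  ⟨fun j => {s j}, fun _ => convex_singleton _, (Set.univ_pi_singleton s).symm⟩

theorem IsBox.contractOp_eq_self_of_subset {n : ℕ} {r B : Set (Fin n → ℝ)} (hB : IsBox B)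
    (hne : B.Nonempty) (hBr : B ⊆ r) : contractOp r B = B := by
  obtain ⟨I, hI, rfl⟩ := hB
  refine Set.pi_congr rfl fun j _ => ?_
  rw [Set.inter_eq_right.2 hBr, Set.eval_image_univ_pi hne, (hI j).convexHull_eq]

theorem stmt_15_general {n : ℕ} {ι : Sort*} (r : ι → Set (Fin n → ℝ)) (B : Set (Fin n → ℝ))
    (hfail : ∀ C, IsBox C → C ⊆ B → (∀ i, contractOp (r i) C = C) → C = ∅) :
    ¬ ∃ s : Fin n → ℝ, (∀ i, s ∈ r i) ∧ s ∈ B := by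
  rintro ⟨s, hsr, hsB⟩
  have hfixed (i : ι) : contractOp (r i) {s} = {s} :=
    (isBox_singleton s).contractOp_eq_self_of_subset (Set.singleton_nonempty s)
      (Set.singleton_subset_iff.2 (hsr i))
  exact Set.singleton_ne_empty s
    (hfail {s} (isBox_singleton s) (Set.singleton_subset_iff.2 hsB) hfixed)

/-- A failed constraint system has no solution in the box. -/
theorem stmt_15 {n m : ℕ} (r : Fin m → Set (Fin n → ℝ))
    (B₀ : Set (Fin n → ℝ)) (hB₀ : IsBox B₀) (hfail : Failed r B₀) :
    ¬ ∃ s : Fin n → ℝ, (∀ i, s ∈ r i) ∧ s ∈ B₀ :=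
  stmt_15_general r B₀ hfail
end
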